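/- Let n ≥ 3 be an integer and let P : ℤ/nℤ → (points of ℙ²(𝔽₄)) be a map such that for all i, j ∈ ℤ/nℤ with j ≠ i and j ≠ i+1, the three points P(i), P(i+1), P(j) are not collinear. Then n ∈ {3, 4, 5, 6, 8, 9}. -/

import Mathlib

/-- The field with four elements. -/
abbrev F4 : Type := GaloisField 2 2

/-- The vector space `𝔽₄³`. -/
abbrev V3 : Type := Fin 3 → F4

/-- Points of `ℙ²(𝔽₄)`: 1-dimensional linear subspaces of `𝔽₄³`. -/
abbrev ProjPoint : Type := {P : Submodule F4 V3 // Module.finrank F4 P = 1}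

/-- Three points of `ℙ²(𝔽₄)` (given as subspaces of `𝔽₄³`) are collinear if they are
contained in a common 2-dimensional linear subspace of `𝔽₄³`. -/
def Collin3 (p q r : Submodule F4 V3) : Prop :=
  ∃ L : Submodule F4 V3, Module.finrank F4 L = 2 ∧ p ≤ L ∧ q ≤ L ∧ r ≤ L

inductive E4 : Type
  | z | o | w | x
  deriving DecidableEq

namespace E4

def add : E4 → E4 → E4
  | z, b => b
  | a, z => a
  | o, o => z
  | o, w => x
  | o, x => w
  | w, o => x
  | w, w => z
  | w, x => o
  | x, o => w
  | x, w => o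
  | x, x => z

def mul : E4 → E4 → E4
  | z, _ => z
  | _, z => z
  | o, b => b
  | a, o => a
  | w, w => x
  | w, x => o
  | x, w => o
  | x, x => w

def nz : E4 → Bool
  | z => false
  | _ => true

abbrev Pt := E4 × E4 × E4

def ok (p q r : Pt) : Bool :=
  nz (add (mul p.1 (add (mul q.2.1 r.2.2) (mul q.2.2 r.2.1)))
    (add (mul p.2.1 (add (mul q.1 r.2.2) (mul q.2.2 r.1)))
      (mul p.2.2 (add (mul q.1 r.2.1) (mul q.2.1 r.1)))))

def all4 : List E4 := [z, o, w, x]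

def pts : List Pt :=
  (all4.flatMap fun a => all4.map fun b => (o, a, b)) ++ (all4.map fun a => (z, o, a)) ++ [(z, z, o)]

def pairs : List Pt → Pt → Bool
  | a :: b :: r, y => ok b a y && pairs (b :: r) y
  | _, _ => true

def ext : List Pt → Pt → Bool
  | [], _ => true
  | a :: r, y => pairs (a :: r) y && r.all (fun t => ok a y t)

def p0 : Pt := (o, z, z)

def closed : List Pt → Bool
  | [] => true
  | a :: r => r.all (fun y => decide (y = p0) || ok a p0 y)

def allowed (n : ℕ) : Bool := n == 3 || n == 4 || n == 5 || n == 6 || n == 8 || n == 9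

def check : ℕ → List Pt → Bool
  | 0, _ => false
  | m + 1, l => (!(closed l) || allowed l.length) &&
      pts.all (fun y => !(ext l y) || check m (y :: l))

theorem check_start : check 8 [(o, o, o), (z, z, o), (z, o, z), (o, z, z)] = true := by
  decide +kernel

def path (f : ℕ → Pt) : ℕ → List Pt
  | 0 => [f 0]
  | k + 1 => f (k + 1) :: path f k

theorem length_path (f : ℕ → Pt) (k : ℕ) : (path f k).length = k + 1 := by
  induction k with
  | zero => rfl
  | succ k ih => simp [path, ih]

theorem mem_path {f : ℕ → Pt} {k : ℕ} {y : Pt} (h : y ∈ path f k) : ∃ j ≤ k, y = f j := by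
  induction k with
  | zero => exact ⟨0, le_rfl, by simpa [path] using h⟩
  | succ k ih =>
    rcases List.mem_cons.1 h with h | h
    · exact ⟨k + 1, le_rfl, h⟩
    · obtain ⟨j, hj, e⟩ := ih h
      exact ⟨j, by omega, e⟩

theorem pairs_path {f : ℕ → Pt} {y : Pt} (k : ℕ) (h : ∀ i < k, ok (f i) (f (i + 1)) y = true) :
    pairs (path f k) y = true := by
  induction k with
  | zero => rfl
  | succ k ih =>
    have h1 := ih (fun i hi => h i (by omega))
    have h2 := h k (by omega)
    cases k with
    | zero => simpa [path, pairs] using h2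
    | succ k =>
      simp only [path, pairs, Bool.and_eq_true] at h1 ⊢
      exact ⟨h2, h1⟩

theorem sound {f : ℕ → Pt} {n : ℕ} (hf : ∀ i, f i ∈ pts) (h0 : f 0 = p0)
    (h : ∀ i j, i + 1 < n → j < n → j ≠ i → j ≠ i + 1 → ok (f i) (f (i + 1)) (f j) = true)
    (hc : ∀ i j, i + 1 = n → 0 < j → j < i → ok (f i) (f 0) (f j) = true)
    (m k : ℕ) (hk : k < n) (hm : check m (path f k) = true) : allowed n = true := by
  induction m generalizing k with
  | zero => simp [check] at hm
  | succ m ih =>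
    simp only [check, Bool.and_eq_true, List.all_eq_true, length_path] at hm
    obtain ⟨h1, h2⟩ := hm
    by_cases e : k + 1 = n
    · have : closed (path f k) = true := by
        cases k with
        | zero => rfl
        | succ k =>
          simp only [path, closed, List.all_eq_true]
          intro y hy
          obtain ⟨j, hj, rfl⟩ := mem_path hy
          rcases Nat.eq_zero_or_pos j with rfl | hj0
          · simp [h0]
          · have := hc (k + 1) j e hj0 (by omega)
            rw [h0] at this
            simp [this]
      rw [this, e] at h1
      simpa using h1
    · have hx : ext (path f k) (f (k + 1)) = true := by
        have hp : pairs (path f k) (f (k + 1)) = true :=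
          pairs_path k (fun i hi => h i (k + 1) (by omega) (by omega) (by omega) (by omega))
        cases k with
        | zero => rfl
        | succ k =>
          simp only [path, ext, Bool.and_eq_true, List.all_eq_true] at hp ⊢
          refine ⟨hp, ?_⟩
          intro y hy
          obtain ⟨j, hj, rfl⟩ := mem_path hy
          exact h (k + 1) j (by omega) (by omega) (by omega) (by omega)
      have := h2 _ (hf (k + 1))
      rw [hx] at this
      exact ih (k + 1) (by omega) (by simpa [path] using this)

end E4

theorem exists_omega : ∃ t : F4, t ^ 2 = t + 1 := by
  classical
  have hcard : Nat.card F4 = 4 := by simpa using GaloisField.card 2 2 (by norm_num)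
  have : Fintype F4 := Fintype.ofFinite _
  have hcard' : Fintype.card F4 = 4 := by rw [← Nat.card_eq_fintype_card, hcard]
  have : ∃ t : F4, t ∉ ({0, 1} : Finset F4) := by
    by_contra! hh
    have h1 : (Finset.univ : Finset F4) ⊆ {0, 1} := fun t _ => hh t
    have h2 := Finset.card_le_card h1
    rw [Finset.card_univ, hcard'] at h2
    have := Finset.card_le_two (a := (0 : F4)) (b := 1)
    omega
  obtain ⟨t, ht⟩ := this
  simp only [Finset.mem_insert, Finset.mem_singleton, not_or] at ht
  have h4 : t ^ 4 = t := by
    have := FiniteField.pow_card t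
    rwa [hcard'] at this
  have h2 : (2 : F4) = 0 := CharTwo.two_eq_zero
  have h3 : t * (t - 1) * (t ^ 2 + t + 1) = 0 := by linear_combination h4
  have h5 : t ^ 2 + t + 1 = 0 := by
    rcases mul_eq_zero.1 h3 with h | h
    · rcases mul_eq_zero.1 h with h | h
      · exact absurd h ht.1
      · exact absurd (sub_eq_zero.1 h) ht.2
    · exact h
  exact ⟨t, by linear_combination h5 - (t + 1) * h2⟩

noncomputable def phi (t : F4) : E4 → F4
  | .z => 0
  | .o => 1
  | .w => t
  | .x => t + 1

theorem phi_add {t : F4} (ht : t ^ 2 = t + 1) (a b : E4) : phi t (a.add b) = phi t a + phi t b := by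
  have h2 : (2 : F4) = 0 := CharTwo.two_eq_zero
  cases a <;> cases b <;> simp only [E4.add, phi] <;> grind

theorem phi_mul {t : F4} (ht : t ^ 2 = t + 1) (a b : E4) : phi t (a.mul b) = phi t a * phi t b := by
  have h2 : (2 : F4) = 0 := CharTwo.two_eq_zero
  cases a <;> cases b <;> simp only [E4.mul, phi] <;> grind

theorem phi_inj {t : F4} (ht : t ^ 2 = t + 1) : Function.Injective (phi t) := by
  have h2 : (2 : F4) = 0 := CharTwo.two_eq_zero
  have h1 : (1 : F4) ≠ 0 := one_ne_zero
  intro a b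
  cases a <;> cases b <;> simp only [phi] <;> grind

theorem phi_surj {t : F4} (ht : t ^ 2 = t + 1) : Function.Surjective (phi t) := by
  classical
  have hcard : Nat.card F4 = 4 := by simpa using GaloisField.card 2 2 (by norm_num)
  have : Fintype F4 := Fintype.ofFinite _
  have hcard' : Fintype.card F4 = 4 := by rw [← Nat.card_eq_fintype_card, hcard]
  let g : Fin 4 → E4 := ![.z, .o, .w, .x]
  have hg : Function.Injective g := by decide
  have : Function.Bijective (phi t ∘ g) := by
    rw [Fintype.bijective_iff_injective_and_card]
    exact ⟨(phi_inj ht).comp hg, by simp [hcard']⟩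
  exact this.2.of_comp

theorem phi_zero_of_not_nz {t : F4} {a : E4} (h : a.nz = false) : phi t a = 0 := by
  cases a <;> simp_all [E4.nz, phi]

theorem phi_z (t : F4) : phi t .z = 0 := rfl

theorem phi_o (t : F4) : phi t .o = 1 := rfl

noncomputable def D (u v w : V3) : F4 :=
  u 0 * (v 1 * w 2 - v 2 * w 1) - u 1 * (v 0 * w 2 - v 2 * w 0) + u 2 * (v 0 * w 1 - v 1 * w 0)

noncomputable def vec (t : F4) (p : E4.Pt) : V3 := ![phi t p.1, phi t p.2.1, phi t p.2.2]

theorem D_vec {t : F4} (ht : t ^ 2 = t + 1) (p q r : E4.Pt)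
    (h : D (vec t p) (vec t q) (vec t r) ≠ 0) : E4.ok p q r = true := by
  by_contra hh
  apply h
  have h2 : (2 : F4) = 0 := CharTwo.two_eq_zero
  have := phi_zero_of_not_nz (t := t) (Bool.eq_false_iff.2 hh)
  simp only [phi_add ht, phi_mul ht] at this
  simp only [D, vec, Matrix.cons_val_zero, Matrix.cons_val_one, Matrix.cons_val]
  grind

theorem D_smul (a b c : F4) (u v w : V3) : D (a • u) (b • v) (c • w) = a * b * c * D u v w := by
  simp only [D, Pi.smul_apply, smul_eq_mul]; ring

/-- normal form -/
theorem exists_pt {t : F4} (ht : t ^ 2 = t + 1) (u : V3) (hu : u ≠ 0) :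
    ∃ p ∈ E4.pts, ∃ c : F4, u = c • vec t p := by
  have key : ∀ a : E4, a ∈ E4.all4 := by intro a; cases a <;> simp [E4.all4]
  by_cases h0 : u 0 = 0
  · by_cases h1 : u 1 = 0
    · refine ⟨(.z, .z, .o), by simp [E4.pts], u 2, ?_⟩
      ext i; fin_cases i <;> simp [vec, phi_z, phi_o, h0, h1]
    · obtain ⟨a, ha⟩ := phi_surj ht (u 2 / u 1)
      refine ⟨(.z, .o, a), by simp [E4.pts, key], u 1, ?_⟩
      ext i; fin_cases i <;> simp [vec, phi_z, phi_o, h0, ha]; field_simp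
  · obtain ⟨a, ha⟩ := phi_surj ht (u 1 / u 0)
    obtain ⟨b, hb⟩ := phi_surj ht (u 2 / u 0)
    refine ⟨(.o, a, b), by simp [E4.pts, key], u 0, ?_⟩
    ext i; fin_cases i <;> simp [vec, phi_z, phi_o, ha, hb] <;> field_simp

theorem D_ne_zero (p q r : Submodule F4 V3) (u v w : V3) (hp : ∀ y ∈ p, ∃ c : F4, c • u = y)
    (hq : ∀ y ∈ q, ∃ c : F4, c • v = y) (hr : ∀ y ∈ r, ∃ c : F4, c • w = y)
    (h : ¬ Collin3 p q r) : D u v w ≠ 0 := by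
  intro hD
  apply h
  have hdet : (Matrix.of ![u, v, w]).det = 0 := by
    rw [← hD, Matrix.det_fin_three]
    simp [D]; ring
  obtain ⟨c, hc, hM⟩ := Matrix.exists_mulVec_eq_zero_iff.2 hdet
  let l : V3 →ₗ[F4] F4 := 
    { toFun := fun y => y ⬝ᵥ c
      map_add' := fun a b => add_dotProduct a b c
      map_smul' := fun a b => smul_dotProduct a b c }
  have hu : l u = 0 := congrFun hM 0
  have hv : l v = 0 := congrFun hM 1
  have hw : l w = 0 := congrFun hM 2
  have hl : l ≠ 0 := by
    intro h0
    apply hc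
    ext i
    have := LinearMap.congr_fun h0 (Pi.single i 1)
    simpa [l] using this
  refine ⟨LinearMap.ker l, ?_, ?_, ?_, ?_⟩
  · have h1 := LinearMap.finrank_range_add_finrank_ker l
    rw [LinearMap.range_eq_top.2 (LinearMap.surjective hl), finrank_top] at h1
    simp at h1
    omega
  · intro y hy
    obtain ⟨a, rfl⟩ := hp y hy
    simp [hu]
  · intro y hy
    obtain ⟨a, rfl⟩ := hq y hy
    simp [hv]
  · intro y hy
    obtain ⟨a, rfl⟩ := hr y hy
    simp [hw]

/-- normalised coordinates with respect to a frame -/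
noncomputable def chg (a b c d : V3) (y : V3) : V3 :=
  ![D y b c / D d b c, D a y c / D a d c, D a b y / D a b d]

theorem D_chg (a b c d u v w : V3) :
    D (chg a b c d u) (chg a b c d v) (chg a b c d w) =
      D a b c ^ 2 * D u v w / (D d b c * D a d c * D a b d) := by
  have h : D ![D u b c, D a u c, D a b u] ![D v b c, D a v c, D a b v]
      ![D w b c, D a w c, D a b w] = D a b c ^ 2 * D u v w := by
    simp only [D, Matrix.cons_val_zero, Matrix.cons_val_one, Matrix.cons_val]
    ring
  rw [← h]
  unfold chg
  generalize D u b c = x1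
  generalize D a u c = x2
  generalize D a b u = x3
  generalize D v b c = x4
  generalize D a v c = x5
  generalize D a b v = x6
  generalize D w b c = x7
  generalize D a w c = x8
  generalize D a b w = x9
  simp only [D, Matrix.cons_val_zero, Matrix.cons_val_one, Matrix.cons_val, div_eq_mul_inv, mul_inv]
  ring

theorem pts_inj {t : F4} (ht : t ^ 2 = t + 1) (p q : E4.Pt) (hp : p ∈ E4.pts) (hq : q ∈ E4.pts)
    (a b : F4) (ha : a • vec t p ≠ 0) (h : a • vec t p = b • vec t q) : p = q := by
  have hz : ∀ a, phi t a = 0 → a = E4.z := fun a e => phi_inj ht (e.trans rfl)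
  have h0 : a * phi t p.1 = b * phi t q.1 := by simpa [vec] using congrFun h 0
  have h1 : a * phi t p.2.1 = b * phi t q.2.1 := by simpa [vec] using congrFun h 1
  have h2 : a * phi t p.2.2 = b * phi t q.2.2 := by simpa [vec] using congrFun h 2
  have ha' : a ≠ 0 := by rintro rfl; simp at ha
  have hb' : b ≠ 0 := by rintro rfl; rw [h] at ha; simp at ha
  have form : ∀ p ∈ E4.pts, p.1 = .o ∨ (p.1 = .z ∧ p.2.1 = .o) ∨ (p.1 = .z ∧ p.2.1 = .z ∧ p.2.2 = .o) := by
    decide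
  obtain ⟨p1, p2, p3⟩ := p
  obtain ⟨q1, q2, q3⟩ := q
  have inj := phi_inj ht
  rcases form _ hp with e | ⟨e, e'⟩ | ⟨e, e', e''⟩ <;>
  rcases form _ hq with g | ⟨g, g'⟩ | ⟨g, g', g''⟩ <;> simp only at * <;> subst_vars <;>
  simp only [phi_z, phi_o, mul_zero, mul_one, zero_eq_mul, mul_eq_zero, ha', hb', false_or] at h0 h1 h2 <;>
  subst_vars <;> simp_all [inj.eq_iff]

theorem mem_of_no_collinear_triple (n : ℕ) (hn : 3 ≤ n) (P : ZMod n → ProjPoint)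
    (h : ∀ i j : ZMod n, j ≠ i → j ≠ i + 1 →
      ¬ Collin3 (P i).1 (P (i + 1)).1 (P j).1) :
    n ∈ ({3, 4, 5, 6, 8, 9} : Set ℕ) := by
  suffices hs : E4.allowed n = true by
    simpa [E4.allowed, or_assoc] using hs
  rcases Nat.eq_or_lt_of_le hn with rfl | hn
  · rfl
  obtain ⟨t, ht⟩ := exists_omega
  have hv : ∀ i : ZMod n, ∃ v : V3, ∀ y ∈ (P i).1, ∃ c : F4, c • v = y := by
    intro i
    obtain ⟨v, -, hv⟩ := finrank_eq_one_iff'.1 (P i).2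
    refine ⟨v, fun y hy => ?_⟩
    obtain ⟨c, hc⟩ := hv ⟨y, hy⟩
    exact ⟨c, congrArg Subtype.val hc⟩
  choose v hv using hv
  have hcast : ∀ i j : ℕ, i < n → j < n → i ≠ j → (i : ZMod n) ≠ j := by
    intro i j hi hj hij e
    rw [ZMod.natCast_eq_natCast_iff', Nat.mod_eq_of_lt hi, Nat.mod_eq_of_lt hj] at e
    exact hij e
  have hD : ∀ i j : ZMod n, j ≠ i → j ≠ i + 1 → D (v i) (v (i + 1)) (v j) ≠ 0 := fun i j h1 h2 =>
    D_ne_zero _ _ _ _ _ _ (hv _) (hv _) (hv _) (h i j h1 h2)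
  let g : ℕ → V3 := fun i => v (i : ZMod n)
  have hg : ∀ i j, i + 1 < n → j < n → j ≠ i → j ≠ i + 1 → D (g i) (g (i + 1)) (g j) ≠ 0 := by
    intro i j hi hj h1 h2
    have := hD i j (hcast _ _ hj (by omega) h1) (by exact_mod_cast hcast j (i + 1) hj hi h2)
    simpa [g] using this
  have hgc : ∀ i j, i + 1 = n → 0 < j → j < i → D (g i) (g 0) (g j) ≠ 0 := by
    intro i j hi hj h1
    have e : (i : ZMod n) + 1 = ((0 : ℕ) : ZMod n) := by
      have : ((i + 1 : ℕ) : ZMod n) = 0 := by rw [hi]; simp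
      simpa using this
    have := hD i j (hcast _ _ (by omega) (by omega) (by omega))
      (by rw [e]; exact hcast j 0 (by omega) (by omega) (by omega))
    rw [e] at this
    exact this
  have d012 := hg 0 2 (by omega) (by omega) (by omega) (by omega)
  have d013 := hg 0 3 (by omega) (by omega) (by omega) (by omega)
  have d123 := hg 1 3 (by omega) (by omega) (by omega) (by omega)
  have d230 := hg 2 0 (by omega) (by omega) (by omega) (by omega)
  simp only [zero_add, Nat.reduceAdd] at d012 d013 d123 d230
  have d312 : D (g 3) (g 1) (g 2) ≠ 0 := by
    intro e; apply d123; rw [← e]; simp only [D]; ring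
  have d032 : D (g 0) (g 3) (g 2) ≠ 0 := by
    intro e; apply d230; rw [← neg_eq_zero, ← e]; simp only [D]; ring
  let k : ℕ → V3 := fun i => chg (g 0) (g 1) (g 2) (g 3) (g i)
  have hkD : ∀ a b c, D (g a) (g b) (g c) ≠ 0 → D (k a) (k b) (k c) ≠ 0 := by
    intro a b c hh
    simp only [k]
    rw [D_chg]
    exact div_ne_zero (mul_ne_zero (pow_ne_zero _ d012) hh)
      (mul_ne_zero (mul_ne_zero d312 d032) d013)
  have hg0 : ∀ i, k i ≠ 0 := by
    intro i e
    have h1 : (1 : ZMod n) ≠ 0 := by exact_mod_cast hcast 1 0 (by omega) (by omega) (by omega)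
    have h2 : (2 : ZMod n) ≠ 0 := by exact_mod_cast hcast 2 0 (by omega) (by omega) (by omega)
    have h3 : D (g i) (g (i + 1)) (g (i + 2)) ≠ 0 := by
      have := hD (i : ZMod n) ((i : ZMod n) + 2) (by simpa using h2)
        (by
          intro e
          apply h1
          linear_combination e)
      simpa [g] using this
    have h4 := hkD _ _ _ h3
    rw [e] at h4
    simp [D] at h4
  choose f hf c hc using fun i => exists_pt ht (k i) (hg0 i)
  have hfD : ∀ a b c, D (g a) (g b) (g c) ≠ 0 → E4.ok (f a) (f b) (f c) = true := by
    intro i j l hh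
    have := hkD _ _ _ hh
    rw [hc i, hc j, hc l, D_smul] at this
    exact D_vec ht _ _ _ (right_ne_zero_of_mul this)
  have hstd : ∀ i p (b : F4), p ∈ E4.pts → k i = b • vec t p → f i = p := by
    intro i p b hp e
    exact pts_inj ht _ _ (hf i) hp (c i) b (by rw [← hc]; exact hg0 i) (by rw [← hc, e])
  have f0 : f 0 = (.o, .z, .z) := by
    refine hstd 0 _ (k 0 0) (by decide) ?_
    ext i; fin_cases i <;> simp [vec, phi_z, phi_o, k, chg, D] <;> ring_nf <;> simp
  have f1 : f 1 = (.z, .o, .z) := by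
    refine hstd 1 _ (k 1 1) (by decide) ?_
    ext i; fin_cases i <;> simp [vec, phi_z, phi_o, k, chg, D] <;> ring_nf <;> simp
  have f2 : f 2 = (.z, .z, .o) := by
    refine hstd 2 _ (k 2 2) (by decide) ?_
    ext i; fin_cases i <;> simp [vec, phi_z, phi_o, k, chg, D] <;> ring_nf <;> simp
  have f3 : f 3 = (.o, .o, .o) := by
    refine hstd 3 _ 1 (by decide) ?_
    ext i; fin_cases i <;> simp [vec, phi_z, phi_o, k, chg, div_self d312, div_self d032, div_self d013]
  refine E4.sound (f := f) (n := n) hf f0 (fun i j h1 h2 h3 h4 => hfD _ _ _ (hg i j h1 h2 h3 h4))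
    (fun i j h1 h2 h3 => hfD _ _ _ (hgc i j h1 h2 h3)) 8 3 hn ?_
  simp only [E4.path, zero_add, Nat.reduceAdd, f0, f1, f2, f3]
  exact E4.check_start
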